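/- Let a, b ∈ 𝔽_q^* with a ≠ wb for every w ∈ 𝔽_p^*, write α = Tr(a²), β = Tr(b²), γ = Tr(ab), and set Ω₄ = Σ_{d ∈ 𝔽_q} Σ_{x ∈ 𝔽_p^*} ζ_p^{x·Tr(d²)} Σ_{y ∈ 𝔽_p^*} ζ_p^{y·Tr(ad)} Σ_{z ∈ 𝔽_p^*} ζ_p^{z·Tr(bd)}. If m is odd, then: Ω₄ = 0 if α = β = 0; Ω₄ = η̄(−β)(p−1)²GḠ if β ≠ 0 and α = γ = 0; Ω₄ = −η̄(−β)(p−1)GḠ if α = 0, β ≠ 0 and γ ≠ 0; Ω₄ = η̄(−α)(p−1)²GḠ if α ≠ 0 and β = γ = 0; Ω₄ = −η̄(−α)(p−1)GḠ if α ≠ 0, β = 0 and γ ≠ 0; Ω₄ = (η̄(−β)(p−1) − η̄(−α))(p−1)GḠ if α ≠ 0, β ≠ 0 and αβ = γ²; and Ω₄ = −(η̄(−β) + η̄(−α))(p−1)GḠ if α ≠ 0, β ≠ 0 and αβ ≠ γ². -/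

import Mathlib

open Finset
open scoped Classical

noncomputable section

/-- `ζ_p = exp(2πi/p)`. -/
def zeta (p : ℕ) : ℂ := Complex.exp (2 * Real.pi * Complex.I / p)

/-- The canonical additive character of `ℤ/p`: `χ̄₁(c) = ζ_p^c`. -/
def chiBar (p : ℕ) (c : ZMod p) : ℂ := zeta p ^ c.val

/-- The quadratic character of `(ℤ/p)^*`, extended by `η̄(0) = 0`. -/
def etaBar (p : ℕ) (c : ZMod p) : ℂ :=
  if c = 0 then 0 else if IsSquare c then 1 else -1

/-- The quadratic character of `F^*`, extended by `η(0) = 0`. -/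
def etaQ (F : Type) [Field F] (x : F) : ℂ :=
  if x = 0 then 0 else if IsSquare x then 1 else -1

/-- The absolute trace map from `F` to `ℤ/p`. -/
def Trq (p : ℕ) (F : Type) [Field F] [Algebra (ZMod p) F] (x : F) : ZMod p :=
  Algebra.trace (ZMod p) F x

/-- The canonical additive character of `F`: `χ₁(x) = ζ_p^{Tr x}`. -/
def chiQ (p : ℕ) (F : Type) [Field F] [Algebra (ZMod p) F] (x : F) : ℂ :=
  chiBar p (Trq p F x)

/-- The quadratic Gauss sum `G` over `F`. -/
def GaussQ (p : ℕ) (F : Type) [Field F] [Fintype F] [Algebra (ZMod p) F] : ℂ :=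
  ∑ x ∈ univ.filter (fun x : F => x ≠ 0), etaQ F x * chiQ p F x

/-- The quadratic Gauss sum `Ḡ` over `ℤ/p`. -/
def GaussP (p : ℕ) [NeZero p] : ℂ :=
  ∑ y ∈ univ.filter (fun y : ZMod p => y ≠ 0), etaBar p y * chiBar p y

/-! Write `c = y a + z b`, so that the phase of the sum is `x Tr(d²) + Tr(c d)`. For `x ≠ 0`,
completing the square turns the sum over `d` into `η̄(x) χ̄₁(-Tr(c²) / 4x) G`, because the quadratic
character of `𝔽_q` restricts to `η̄` on the prime field when the degree is odd. Summing over `x`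
produces the second Gauss sum and leaves `η̄(-Tr(c²)) G Ḡ`. Now `Tr(c²) = α y² + 2γ yz + β z²` is a
binary quadratic form, so by homogeneity the sum over `y, z ≠ 0` is `p - 1` times that at `y = 1`, a
sum of `η̄` over the values at `z ≠ 0` of a polynomial of degree at most two with discriminant
`4(γ² - αβ)`. -/

theorem four_ne_zero_of_ringChar_ne_two {K : Type*} [Field K] (hK : ringChar K ≠ 2) :
    (4 : K) ≠ 0 := by
  rw [show (4 : K) = 2 ^ 2 by norm_num]
  exact pow_ne_zero 2 (Ring.two_ne_zero hK)

theorem discrim_two_mul_eq_zero_iff {K : Type*} [Field K] (hK : ringChar K ≠ 2) {a b c : K} :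
    discrim a (2 * b) c = 0 ↔ c * a = b ^ 2 := by
  rw [show discrim a (2 * b) c = 4 * (b ^ 2 - c * a) by rw [discrim]; ring,
    mul_eq_zero_iff_left (four_ne_zero_of_ringChar_ne_two hK), sub_eq_zero, eq_comm]

section QuadraticCharacterSums

variable {K : Type*} [Field K] [Fintype K] [DecidableEq K]

theorem quadraticChar_sq_mul {c : K} (hc : c ≠ 0) (x : K) :
    quadraticChar K (c ^ 2 * x) = quadraticChar K x := by
  rw [map_mul, quadraticChar_sq_one' hc, one_mul]

theorem quadraticChar_inv (x : K) : quadraticChar K x⁻¹ = quadraticChar K x := by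
  rw [← MulChar.inv_apply', (quadraticChar_isQuadratic K).inv]

theorem sum_comp_sq {M : Type*} [AddCommGroup M] (hK : ringChar K ≠ 2) (f : K → M) :
    ∑ x : K, f (x ^ 2) = ∑ t : K, (quadraticChar K t + 1) • f t := by
  rw [← sum_fiberwise' univ (fun x : K => x ^ 2) f]
  refine sum_congr rfl fun t _ => ?_
  rw [sum_const, ← quadraticChar_card_sqrts hK t, natCast_zsmul]
  congr 2
  ext x
  simp

theorem sum_quadraticChar_linear (hK : ringChar K ≠ 2) {b : K} (hb : b ≠ 0) (c : K) :
    ∑ x : K, quadraticChar K (b * x + c) = 0 := by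
  rw [← quadraticChar_sum_zero hK]
  exact Equiv.sum_comp ((Equiv.mulLeft₀ b hb).trans (Equiv.addRight c)) _

theorem sum_quadraticChar_mul_sub (hK : ringChar K ≠ 2) {e : K} (he : e ≠ 0) :
    ∑ t : K, quadraticChar K t * quadraticChar K (t - e) = -1 := by
  have rescale (s : K) : quadraticChar K (e * s) * quadraticChar K (e * s - e) =
      quadraticChar K (-1) * (quadraticChar K s * quadraticChar K (1 - s)) := by
    rw [← map_mul, ← map_mul, ← map_mul, ← quadraticChar_sq_mul he (-1 * (s * (1 - s)))]
    congr 1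
    ring
  calc ∑ t : K, quadraticChar K t * quadraticChar K (t - e)
      = ∑ s : K, quadraticChar K (e * s) * quadraticChar K (e * s - e) :=
        (Equiv.sum_comp (Equiv.mulLeft₀ e he) _).symm
    _ = quadraticChar K (-1) * jacobiSum (quadraticChar K) (quadraticChar K)⁻¹ := by
        simp only [rescale, ← mul_sum, jacobiSum, (quadraticChar_isQuadratic K).inv]
    _ = -quadraticChar K (-1) ^ 2 := by
        rw [jacobiSum_nontrivial_inv (quadraticChar_ne_one hK)]
        ring
    _ = -1 := by rw [quadraticChar_sq_one (neg_ne_zero.mpr one_ne_zero)]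

theorem sum_quadraticChar_sq_sub (hK : ringChar K ≠ 2) {e : K} (he : e ≠ 0) :
    ∑ u : K, quadraticChar K (u ^ 2 - e) = -1 := by
  have shift : ∑ t : K, quadraticChar K (t - e) = 0 := by
    simpa [sub_eq_add_neg] using sum_quadraticChar_linear hK one_ne_zero (-e)
  rw [sum_comp_sq hK fun t => quadraticChar K (t - e)]
  simp only [smul_eq_mul, add_mul, one_mul, sum_add_distrib, shift,
    sum_quadraticChar_mul_sub hK he, add_zero]

theorem sum_quadraticChar_sq : ∑ u : K, quadraticChar K (u ^ 2) = Fintype.card K - 1 := by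
  have h (u : K) : quadraticChar K (u ^ 2) = 1 - if u = 0 then 1 else 0 := by
    split_ifs with hu
    · simp [hu]
    · simp [quadraticChar_sq_one' hu]
  simp [h]

theorem sum_quadraticChar_quadratic (hK : ringChar K ≠ 2) {a : K} (ha : a ≠ 0) (b c : K) :
    ∑ x : K, quadraticChar K (a * x ^ 2 + b * x + c) =
      quadraticChar K a * ∑ u : K, quadraticChar K (u ^ 2 - discrim a b c) := by
  have two_ne : (2 : K) ≠ 0 := Ring.two_ne_zero hK
  have complete (x : K) : quadraticChar K (a * x ^ 2 + b * x + c) =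
      quadraticChar K a * quadraticChar K ((2 * a * x + b) ^ 2 - discrim a b c) := by
    rw [← map_mul, ← quadraticChar_sq_mul (mul_ne_zero two_ne ha) (a * x ^ 2 + b * x + c), discrim]
    congr 1
    ring
  simp only [complete, ← mul_sum]
  congr 1
  exact Equiv.sum_comp
    ((Equiv.mulLeft₀ (2 * a) (mul_ne_zero two_ne ha)).trans (Equiv.addRight b))
    fun u => quadraticChar K (u ^ 2 - discrim a b c)

theorem sum_quadraticChar_quadratic_of_discrim_ne_zero (hK : ringChar K ≠ 2) {a b c : K}
    (ha : a ≠ 0) (h : discrim a b c ≠ 0) :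
    ∑ x : K, quadraticChar K (a * x ^ 2 + b * x + c) = -quadraticChar K a := by
  rw [sum_quadraticChar_quadratic hK ha, sum_quadraticChar_sq_sub hK h, mul_neg_one]

theorem sum_quadraticChar_quadratic_of_discrim_eq_zero (hK : ringChar K ≠ 2) {a b c : K}
    (ha : a ≠ 0) (h : discrim a b c = 0) :
    ∑ x : K, quadraticChar K (a * x ^ 2 + b * x + c) =
      quadraticChar K a * (Fintype.card K - 1) := by
  simp only [sum_quadraticChar_quadratic hK ha, h, sub_zero, sum_quadraticChar_sq]

theorem sum_ne_zero_quadraticChar_binary_form (a b c : K) :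
    ∑ y ∈ univ.filter (fun y : K => y ≠ 0), ∑ z ∈ univ.filter (fun z : K => z ≠ 0),
        quadraticChar K (a * z ^ 2 + b * y * z + c * y ^ 2) =
      (Fintype.card K - 1) *
        (∑ z : K, quadraticChar K (a * z ^ 2 + b * z + c) - quadraticChar K c) := by
  have dehomogenize {y : K} (hy : y ≠ 0) :
      ∑ z ∈ univ.filter (fun z : K => z ≠ 0),
          quadraticChar K (a * z ^ 2 + b * y * z + c * y ^ 2) =
        ∑ z : K, quadraticChar K (a * z ^ 2 + b * z + c) - quadraticChar K c := by
    rw [filter_ne', sum_erase_eq_sub (mem_univ 0), ← Equiv.sum_comp (Equiv.mulLeft₀ y hy)]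
    congr 1
    · refine sum_congr rfl fun z _ => ?_
      rw [← quadraticChar_sq_mul hy (a * z ^ 2 + b * z + c), Equiv.mulLeft₀_apply]
      congr 1
      ring
    · rw [← quadraticChar_sq_mul hy c]
      congr 1
      ring
  rw [sum_congr rfl fun y hy => dehomogenize (mem_filter.mp hy).2, sum_const, nsmul_eq_mul,
    filter_ne', cast_card_erase_of_mem (mem_univ 0), card_univ]

theorem quadraticChar_algebraMap_of_odd_finrank {F : Type*} [Field F] [Fintype F]
    [DecidableEq F] [Algebra K F] (hKF : Odd (Module.finrank K F)) (c : K) :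
    quadraticChar F (algebraMap K F c) = quadraticChar K c := by
  rcases eq_or_ne c 0 with rfl | hc
  · simp
  have isSquare_iff : IsSquare (algebraMap K F c) ↔ IsSquare c := by
    refine ⟨fun h => ?_, fun h => h.map (algebraMap K F)⟩
    obtain ⟨k, hk⟩ := hKF
    have norm_sq : IsSquare (c ^ (2 * k + 1)) := by
      simpa only [Algebra.norm_algebraMap, hk] using h.map (Algebra.norm K)
    have hdiv : c = c ^ (2 * k + 1) / (c ^ k) ^ 2 := by
      field_simp
      ring
    rw [hdiv]
    exact norm_sq.div (IsSquare.sq _)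
  simp only [quadraticChar_apply, quadraticCharFun, isSquare_iff, map_eq_zero]

end QuadraticCharacterSums

section QuadraticGaussSums

variable {K R : Type*} [Field K] [Fintype K] [DecidableEq K] [CommRing R]

/-- The Gauss sum of the quadratic character of `K`, viewed as an `R`-valued character. -/
def quadraticGaussSum (ψ : AddChar K R) : R :=
  gaussSum ((quadraticChar K).ringHomComp (Int.castRingHom R)) ψ

theorem quadraticGaussSum_eq_sum (ψ : AddChar K R) :
    quadraticGaussSum ψ = ∑ x : K, (quadraticChar K x : R) * ψ x := rfl

theorem sum_quadraticChar_mul_addChar (hK : ringChar K ≠ 2) (ψ : AddChar K R) (c : K) :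
    ∑ x : K, (quadraticChar K x : R) * ψ (c * x) =
      (quadraticChar K c : R) * quadraticGaussSum ψ := by
  rcases eq_or_ne c 0 with rfl | hc
  · have cast_sum : ∑ x : K, (quadraticChar K x : R) = 0 :=
      mod_cast congrArg (Int.cast : ℤ → R) (quadraticChar_sum_zero hK)
    simp only [zero_mul, AddChar.map_zero_eq_one, mul_one, cast_sum, MulChar.map_zero,
      Int.cast_zero]
  · have absorb (x : K) : (quadraticChar K x : R) * ψ (c * x) =
        (quadraticChar K c : R) * ((quadraticChar K (c * x) : R) * ψ (c * x)) := by
      rw [← mul_assoc, ← Int.cast_mul, ← map_mul, ← mul_assoc, ← sq, quadraticChar_sq_mul hc]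
    simp only [absorb, ← mul_sum]
    congr 1
    exact Equiv.sum_comp (Equiv.mulLeft₀ c hc) fun x => (quadraticChar K x : R) * ψ x

theorem sum_ne_zero_quadraticChar_mul_addChar_div (hK : ringChar K ≠ 2) (ψ : AddChar K R)
    (c : K) :
    ∑ x ∈ univ.filter (fun x : K => x ≠ 0), (quadraticChar K x : R) * ψ (c / x) =
      (quadraticChar K c : R) * quadraticGaussSum ψ := by
  rw [filter_ne', sum_erase _ (by simp), ← sum_quadraticChar_mul_addChar hK ψ c,
    ← Equiv.sum_comp (Equiv.inv K)]
  simp only [Equiv.inv_apply, quadraticChar_inv, div_inv_eq_mul]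

theorem sum_addChar_quadratic [IsDomain R] (hK : ringChar K ≠ 2) {ψ : AddChar K R}
    (hψ : ψ ≠ 1) {a : K} (ha : a ≠ 0) (b : K) :
    ∑ x : K, ψ (a * x ^ 2 + b * x) =
      (quadraticChar K a : R) * ψ (-b ^ 2 / (4 * a)) * quadraticGaussSum ψ := by
  have two_ne : (2 : K) ≠ 0 := Ring.two_ne_zero hK
  have four_ne : (4 : K) ≠ 0 := four_ne_zero_of_ringChar_ne_two hK
  have complete (x : K) : ψ (a * (x - b / (2 * a)) ^ 2 + b * (x - b / (2 * a))) =
      ψ (-b ^ 2 / (4 * a)) * ψ (a * x ^ 2) := by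
    rw [← AddChar.map_add_eq_mul]
    congr 1
    field_simp
    ring
  have orthogonality : ∑ t : K, ψ (a * t) = 0 := by
    rw [← AddChar.sum_eq_zero_of_ne_one hψ]
    exact Equiv.sum_comp (Equiv.mulLeft₀ a ha) ψ
  have pure_square : ∑ x : K, ψ (a * x ^ 2) =
      (quadraticChar K a : R) * quadraticGaussSum ψ := by
    rw [sum_comp_sq hK fun t => ψ (a * t), ← sum_quadraticChar_mul_addChar hK]
    simp [add_mul, sum_add_distrib, orthogonality]
  rw [← Equiv.sum_comp (Equiv.subRight (b / (2 * a)))]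
  simp only [Equiv.subRight_apply, complete, ← mul_sum, pure_square]
  ring

end QuadraticGaussSums

section TraceCharacter

variable {K F R : Type*} [Field K] [Field F] [Algebra K F] [CommRing R]

/-- The lift `ψ ∘ Tr` to `F` of an additive character `ψ` of the subfield `K`. -/
def traceAddChar (F : Type*) [Field F] [Algebra K F] (ψ : AddChar K R) : AddChar F R :=
  ψ.compAddMonoidHom (Algebra.trace K F).toAddMonoidHom

theorem traceAddChar_apply (ψ : AddChar K R) (x : F) :
    traceAddChar F ψ x = ψ (Algebra.trace K F x) := rfl

theorem traceAddChar_ne_one [Finite F] {ψ : AddChar K R} (hψ : ψ ≠ 1) : traceAddChar F ψ ≠ 1 := by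
  obtain ⟨t, ht⟩ := AddChar.ne_one_iff.mp hψ
  obtain ⟨x, rfl⟩ := Algebra.trace_surjective K F t
  exact AddChar.ne_one_iff.mpr ⟨x, ht⟩

end TraceCharacter

section Omega4

variable {K F R : Type*} [Field K] [Fintype K] [DecidableEq K]
  [Field F] [Fintype F] [Algebra K F] [CommRing R]

/-- The exponential sum `Ω₄` attached to `a, b ∈ F`, for an arbitrary extension `F / K` of finite
fields and an arbitrary additive character `ψ` of `K` in place of `y ↦ ζ_p ^ y`. -/
def Omega4 (ψ : AddChar K R) (a b : F) : R :=
  ∑ d : F,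
    (∑ x ∈ univ.filter (fun x : K => x ≠ 0), ψ (x * Algebra.trace K F (d ^ 2))) *
    (∑ y ∈ univ.filter (fun y : K => y ≠ 0), ψ (y * Algebra.trace K F (a * d))) *
    (∑ z ∈ univ.filter (fun z : K => z ≠ 0), ψ (z * Algebra.trace K F (b * d)))

theorem Omega4_eq_sum_trace (ψ : AddChar K R) (a b : F) :
    Omega4 ψ a b =
      ∑ y ∈ univ.filter (fun y : K => y ≠ 0), ∑ z ∈ univ.filter (fun z : K => z ≠ 0),
        ∑ x ∈ univ.filter (fun x : K => x ≠ 0), ∑ d : F,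
          ψ (x * Algebra.trace K F (d ^ 2) + Algebra.trace K F ((y • a + z • b) * d)) := by
  have merge (x y z : K) (d : F) :
      ψ (x * Algebra.trace K F (d ^ 2) + Algebra.trace K F ((y • a + z • b) * d)) =
        ψ (x * Algebra.trace K F (d ^ 2)) * ψ (y * Algebra.trace K F (a * d)) *
          ψ (z * Algebra.trace K F (b * d)) := by
    simp only [add_mul, smul_mul_assoc, map_add, map_smul, smul_eq_mul, AddChar.map_add_eq_mul,
      mul_assoc]
  simp only [merge, sum_comm (t := (univ : Finset F)), ← sum_mul, ← mul_sum, Omega4]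

variable [DecidableEq F]

theorem sum_addChar_trace_quadratic [IsDomain R] (hK : ringChar K ≠ 2)
    (hKF : Odd (Module.finrank K F)) {ψ : AddChar K R} (hψ : ψ ≠ 1) {x : K} (hx : x ≠ 0)
    (c : F) :
    ∑ d : F, ψ (x * Algebra.trace K F (d ^ 2) + Algebra.trace K F (c * d)) =
      (quadraticChar K x : R) * ψ (-Algebra.trace K F (c ^ 2) / 4 / x) *
        quadraticGaussSum (traceAddChar F ψ) := by
  have hF : ringChar F ≠ 2 := Algebra.ringChar_eq K F ▸ hK
  have hx' : algebraMap K F x ≠ 0 := (map_ne_zero _).mpr hx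
  have linear : algebraMap K F (-(4 * x)⁻¹) * c ^ 2 = -c ^ 2 / (4 * algebraMap K F x) := by
    simp only [map_neg, map_inv₀, map_mul, map_ofNat]
    ring
  have gauss := sum_addChar_quadratic hF (traceAddChar_ne_one (F := F) hψ) hx' c
  rw [← linear, quadraticChar_algebraMap_of_odd_finrank hKF] at gauss
  simp only [traceAddChar_apply, map_add, ← Algebra.smul_def, map_smul, smul_eq_mul] at gauss
  rw [gauss]
  congr 3
  ring

theorem sum_ne_zero_sum_addChar_trace_quadratic [IsDomain R] (hK : ringChar K ≠ 2)
    (hKF : Odd (Module.finrank K F)) {ψ : AddChar K R} (hψ : ψ ≠ 1) (c : F) :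
    ∑ x ∈ univ.filter (fun x : K => x ≠ 0), ∑ d : F,
        ψ (x * Algebra.trace K F (d ^ 2) + Algebra.trace K F (c * d)) =
      (quadraticChar K (-Algebra.trace K F (c ^ 2)) : R) *
        (quadraticGaussSum (traceAddChar F ψ) * quadraticGaussSum ψ) := by
  have two_ne : (2 : K) ≠ 0 := Ring.two_ne_zero hK
  have drop_four : quadraticChar K (-Algebra.trace K F (c ^ 2) / 4) =
      quadraticChar K (-Algebra.trace K F (c ^ 2)) := by
    rw [← quadraticChar_sq_mul two_ne (-Algebra.trace K F (c ^ 2) / 4)]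
    congr 1
    rw [show (2 : K) ^ 2 = 4 by norm_num, mul_div_cancel₀ _ (four_ne_zero_of_ringChar_ne_two hK)]
  rw [sum_congr rfl fun x hx =>
      sum_addChar_trace_quadratic hK hKF hψ (mem_filter.mp hx).2 c,
    ← sum_mul, sum_ne_zero_quadraticChar_mul_addChar_div hK, drop_four]
  ring

section Evaluation

variable [IsDomain R] (hK : ringChar K ≠ 2) (hKF : Odd (Module.finrank K F)) {ψ : AddChar K R}
  (hψ : ψ ≠ 1) (a b : F) (α β γ : K) (hα : α = Algebra.trace K F (a ^ 2))
  (hβ : β = Algebra.trace K F (b ^ 2)) (hγ : γ = Algebra.trace K F (a * b))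

include hK hKF hψ hα hβ hγ

theorem Omega4_eq_sum_quadraticChar :
    Omega4 ψ a b =
      ((∑ z : K, quadraticChar K (-β * z ^ 2 + -(2 * γ) * z + -α) - quadraticChar K (-α) : ℤ) : R) *
        ((Fintype.card K : R) - 1) *
        (quadraticGaussSum (traceAddChar F ψ) * quadraticGaussSum ψ) := by
  have form (y z : K) : -Algebra.trace K F ((y • a + z • b) ^ 2) =
      -β * z ^ 2 + -(2 * γ) * y * z + -α * y ^ 2 := by
    have expand : (y • a + z • b) ^ 2 =
        y ^ 2 • a ^ 2 + (2 * y * z) • (a * b) + z ^ 2 • b ^ 2 := by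
      simp only [Algebra.smul_def, map_mul, map_pow, map_ofNat]
      ring
    simp only [expand, map_add, map_smul, smul_eq_mul, ← hα, ← hβ, ← hγ]
    ring
  simp only [Omega4_eq_sum_trace, sum_ne_zero_sum_addChar_trace_quadratic hK hKF hψ, form,
    ← sum_mul]
  congr 1
  have form_sum := congrArg (Int.cast : ℤ → R)
    (sum_ne_zero_quadraticChar_binary_form (-β) (-(2 * γ)) (-α))
  push_cast at form_sum ⊢
  rw [form_sum, mul_comm]

theorem Omega4_of_mul_ne_sq (hβ0 : β ≠ 0) (h : α * β ≠ γ ^ 2) :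
    Omega4 ψ a b =
      -(((quadraticChar K (-β) : R) + (quadraticChar K (-α) : R)) * ((Fintype.card K : R) - 1) *
        (quadraticGaussSum (traceAddChar F ψ) * quadraticGaussSum ψ)) := by
  have discrim_ne : discrim (-β) (-(2 * γ)) (-α) ≠ 0 := by
    rwa [discrim_neg, Ne, discrim_two_mul_eq_zero_iff hK]
  rw [Omega4_eq_sum_quadraticChar hK hKF hψ a b α β γ hα hβ hγ,
    sum_quadraticChar_quadratic_of_discrim_ne_zero hK (neg_ne_zero.mpr hβ0) discrim_ne]
  push_cast
  ring

theorem Omega4_of_mul_eq_sq (hβ0 : β ≠ 0) (h : α * β = γ ^ 2) :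
    Omega4 ψ a b =
      ((quadraticChar K (-β) : R) * ((Fintype.card K : R) - 1) - (quadraticChar K (-α) : R)) *
        ((Fintype.card K : R) - 1) *
        (quadraticGaussSum (traceAddChar F ψ) * quadraticGaussSum ψ) := by
  have discrim_eq : discrim (-β) (-(2 * γ)) (-α) = 0 := by
    rwa [discrim_neg, discrim_two_mul_eq_zero_iff hK]
  rw [Omega4_eq_sum_quadraticChar hK hKF hψ a b α β γ hα hβ hγ,
    sum_quadraticChar_quadratic_of_discrim_eq_zero hK (neg_ne_zero.mpr hβ0) discrim_eq]
  push_cast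
  ring

theorem Omega4_of_trace_sq_eq_zero_of_trace_mul_ne_zero (hβ0 : β = 0) (hγ0 : γ ≠ 0) :
    Omega4 ψ a b =
      -((quadraticChar K (-α) : R) * ((Fintype.card K : R) - 1) *
        (quadraticGaussSum (traceAddChar F ψ) * quadraticGaussSum ψ)) := by
  have slope_ne : -(2 * γ) ≠ 0 := neg_ne_zero.mpr (mul_ne_zero (Ring.two_ne_zero hK) hγ0)
  rw [Omega4_eq_sum_quadraticChar hK hKF hψ a b α β γ hα hβ hγ]
  simp only [hβ0, neg_zero, zero_mul, zero_add, sum_quadraticChar_linear hK slope_ne]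
  push_cast
  ring

theorem Omega4_of_trace_sq_eq_zero_of_trace_mul_eq_zero (hβ0 : β = 0) (hγ0 : γ = 0) :
    Omega4 ψ a b =
      (quadraticChar K (-α) : R) * ((Fintype.card K : R) - 1) ^ 2 *
        (quadraticGaussSum (traceAddChar F ψ) * quadraticGaussSum ψ) := by
  rw [Omega4_eq_sum_quadraticChar hK hKF hψ a b α β γ hα hβ hγ]
  simp only [hβ0, hγ0, mul_zero, neg_zero, zero_mul, zero_add, sum_const, card_univ, nsmul_eq_mul]
  push_cast
  ring

theorem Omega4_eval_m_odd_general :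
    let η (t : K) : R := quadraticChar K t
    let q : R := Fintype.card K
    let GG := quadraticGaussSum (traceAddChar F ψ) * quadraticGaussSum ψ
    (α = 0 ∧ β = 0 → Omega4 ψ a b = 0) ∧
    (β ≠ 0 ∧ α = 0 ∧ γ = 0 → Omega4 ψ a b = η (-β) * (q - 1) ^ 2 * GG) ∧
    (α = 0 ∧ β ≠ 0 ∧ γ ≠ 0 → Omega4 ψ a b = -(η (-β) * (q - 1) * GG)) ∧
    (α ≠ 0 ∧ β = 0 ∧ γ = 0 → Omega4 ψ a b = η (-α) * (q - 1) ^ 2 * GG) ∧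
    (α ≠ 0 ∧ β = 0 ∧ γ ≠ 0 → Omega4 ψ a b = -(η (-α) * (q - 1) * GG)) ∧
    (α ≠ 0 ∧ β ≠ 0 ∧ α * β = γ ^ 2 →
      Omega4 ψ a b = (η (-β) * (q - 1) - η (-α)) * (q - 1) * GG) ∧
    (α ≠ 0 ∧ β ≠ 0 ∧ α * β ≠ γ ^ 2 →
      Omega4 ψ a b = -((η (-β) + η (-α)) * (q - 1) * GG)) := by
  intro η q GG
  have mul_ne := Omega4_of_mul_ne_sq hK hKF hψ a b α β γ hα hβ hγ
  have mul_eq := Omega4_of_mul_eq_sq hK hKF hψ a b α β γ hα hβ hγ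
  have γ_ne :=
    Omega4_of_trace_sq_eq_zero_of_trace_mul_ne_zero hK hKF hψ a b α β γ hα hβ hγ
  have γ_eq :=
    Omega4_of_trace_sq_eq_zero_of_trace_mul_eq_zero hK hKF hψ a b α β γ hα hβ hγ
  have η_neg_zero (hα0 : α = 0) : (quadraticChar K (-α) : R) = 0 := by
    rw [hα0, neg_zero, MulChar.map_zero, Int.cast_zero]
  refine ⟨?_, ?_, ?_, fun ⟨_, hβ0, hγ0⟩ => γ_eq hβ0 hγ0, fun ⟨_, hβ0, hγ0⟩ => γ_ne hβ0 hγ0,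
    fun ⟨_, hβ0, h⟩ => mul_eq hβ0 h, fun ⟨_, hβ0, h⟩ => mul_ne hβ0 h⟩
  · rintro ⟨hα0, hβ0⟩
    rcases eq_or_ne γ 0 with hγ0 | hγ0
    · rw [γ_eq hβ0 hγ0, η_neg_zero hα0, zero_mul, zero_mul]
    · rw [γ_ne hβ0 hγ0, η_neg_zero hα0, zero_mul, zero_mul, neg_zero]
  · rintro ⟨hβ0, hα0, hγ0⟩
    rw [mul_eq hβ0 (by rw [hα0, hγ0, zero_mul, zero_pow two_ne_zero]), η_neg_zero hα0, sub_zero,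
      mul_assoc _ _ ((Fintype.card K : R) - 1), ← sq]
  · rintro ⟨hα0, hβ0, hγ0⟩
    rw [mul_ne hβ0 (by rw [hα0, zero_mul]; exact (pow_ne_zero 2 hγ0).symm), η_neg_zero hα0,
      add_zero]

end Evaluation

end Omega4

section PrimeField

theorem chiBar_eq_stdAddChar (p : ℕ) [NeZero p] (c : ZMod p) :
    chiBar p c = ZMod.stdAddChar c := by
  conv_rhs => rw [← ZMod.natCast_zmod_val c, ← Int.cast_natCast, ZMod.stdAddChar_coe]
  rw [chiBar, zeta, ← Complex.exp_nat_mul]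
  congr 1
  push_cast
  ring

theorem stdAddChar_ne_one (p : ℕ) [NeZero p] [Nontrivial (ZMod p)] :
    (ZMod.stdAddChar : AddChar (ZMod p) ℂ) ≠ 1 := by
  simpa using ZMod.isPrimitive_stdAddChar p one_ne_zero

theorem etaQ_eq_quadraticChar {F : Type} [Field F] [Fintype F] [DecidableEq F] (x : F) :
    etaQ F x = quadraticChar F x := by
  simp only [etaQ, quadraticChar_apply, quadraticCharFun]
  split_ifs <;> simp

theorem etaBar_eq_quadraticChar {p : ℕ} [Fact p.Prime] (c : ZMod p) :
    etaBar p c = quadraticChar (ZMod p) c := by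
  simp only [etaBar, quadraticChar_apply, quadraticCharFun]
  split_ifs <;> simp

theorem GaussQ_eq_quadraticGaussSum (p : ℕ) [Fact p.Prime] (F : Type) [Field F] [Fintype F]
    [Algebra (ZMod p) F] :
    GaussQ p F = quadraticGaussSum (traceAddChar F (ZMod.stdAddChar : AddChar (ZMod p) ℂ)) := by
  simp only [GaussQ, etaQ_eq_quadraticChar, chiQ, chiBar_eq_stdAddChar, quadraticGaussSum_eq_sum]
  refine sum_filter_of_ne fun x _ hx hx0 => hx ?_
  rw [hx0, MulChar.map_zero, Int.cast_zero, zero_mul]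

theorem GaussP_eq_quadraticGaussSum (p : ℕ) [Fact p.Prime] :
    GaussP p = quadraticGaussSum (ZMod.stdAddChar : AddChar (ZMod p) ℂ) := by
  simp only [GaussP, etaBar_eq_quadraticChar, chiBar_eq_stdAddChar, quadraticGaussSum_eq_sum]
  rw [filter_ne', sum_erase _ (by simp)]

theorem ringChar_zmod_ne_two {p : ℕ} (hp : Odd p) : ringChar (ZMod p) ≠ 2 := by
  rw [ZMod.ringChar_zmod_n]
  exact hp.ne_two_of_dvd_nat dvd_rfl

theorem finrank_zmod_of_card_eq_pow {p m : ℕ} [Fact p.Prime] {F : Type*} [Field F] [Fintype F]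
    [Algebra (ZMod p) F] (hq : Fintype.card F = p ^ m) : Module.finrank (ZMod p) F = m := by
  have h := Module.card_eq_pow_finrank (K := ZMod p) (V := F)
  rw [hq, ZMod.card] at h
  exact (Nat.pow_right_injective (Fact.out : p.Prime).two_le h).symm

end PrimeField

theorem Omega4_eval_m_odd (p m : ℕ) [Fact (Nat.Prime p)] (hp : Odd p)
    (F : Type) [Field F] [Fintype F] [Algebra (ZMod p) F]
    (hm : 0 < m) (hq : Fintype.card F = p ^ m)
    (hmodd : Odd m) (a b : F) (ha : a ≠ 0) (hb : b ≠ 0)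
    (hab : ∀ w : ZMod p, w ≠ 0 → a ≠ algebraMap (ZMod p) F w * b)
    (α β γ : ZMod p) (hα : α = Trq p F (a ^ 2)) (hβ : β = Trq p F (b ^ 2))
    (hγ : γ = Trq p F (a * b)) :
    (α = 0 ∧ β = 0 →
      (∑ d : F,
      (∑ x ∈ univ.filter (fun x : ZMod p => x ≠ 0), chiBar p (x * Trq p F (d ^ 2))) *
      (∑ y ∈ univ.filter (fun y : ZMod p => y ≠ 0), chiBar p (y * Trq p F (a * d))) *
      (∑ z ∈ univ.filter (fun z : ZMod p => z ≠ 0), chiBar p (z * Trq p F (b * d)))) = 0) ∧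
    (β ≠ 0 ∧ α = 0 ∧ γ = 0 →
      (∑ d : F,
      (∑ x ∈ univ.filter (fun x : ZMod p => x ≠ 0), chiBar p (x * Trq p F (d ^ 2))) *
      (∑ y ∈ univ.filter (fun y : ZMod p => y ≠ 0), chiBar p (y * Trq p F (a * d))) *
      (∑ z ∈ univ.filter (fun z : ZMod p => z ≠ 0), chiBar p (z * Trq p F (b * d)))) = etaBar p (-β) * ((p : ℂ) - 1) ^ 2 * (GaussQ p F * GaussP p)) ∧
    (α = 0 ∧ β ≠ 0 ∧ γ ≠ 0 →
      (∑ d : F,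
      (∑ x ∈ univ.filter (fun x : ZMod p => x ≠ 0), chiBar p (x * Trq p F (d ^ 2))) *
      (∑ y ∈ univ.filter (fun y : ZMod p => y ≠ 0), chiBar p (y * Trq p F (a * d))) *
      (∑ z ∈ univ.filter (fun z : ZMod p => z ≠ 0), chiBar p (z * Trq p F (b * d)))) = -(etaBar p (-β) * ((p : ℂ) - 1) * (GaussQ p F * GaussP p))) ∧
    (α ≠ 0 ∧ β = 0 ∧ γ = 0 →
      (∑ d : F,
      (∑ x ∈ univ.filter (fun x : ZMod p => x ≠ 0), chiBar p (x * Trq p F (d ^ 2))) *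
      (∑ y ∈ univ.filter (fun y : ZMod p => y ≠ 0), chiBar p (y * Trq p F (a * d))) *
      (∑ z ∈ univ.filter (fun z : ZMod p => z ≠ 0), chiBar p (z * Trq p F (b * d)))) = etaBar p (-α) * ((p : ℂ) - 1) ^ 2 * (GaussQ p F * GaussP p)) ∧
    (α ≠ 0 ∧ β = 0 ∧ γ ≠ 0 →
      (∑ d : F,
      (∑ x ∈ univ.filter (fun x : ZMod p => x ≠ 0), chiBar p (x * Trq p F (d ^ 2))) *
      (∑ y ∈ univ.filter (fun y : ZMod p => y ≠ 0), chiBar p (y * Trq p F (a * d))) *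
      (∑ z ∈ univ.filter (fun z : ZMod p => z ≠ 0), chiBar p (z * Trq p F (b * d)))) = -(etaBar p (-α) * ((p : ℂ) - 1) * (GaussQ p F * GaussP p))) ∧
    (α ≠ 0 ∧ β ≠ 0 ∧ α * β = γ ^ 2 →
      (∑ d : F,
      (∑ x ∈ univ.filter (fun x : ZMod p => x ≠ 0), chiBar p (x * Trq p F (d ^ 2))) *
      (∑ y ∈ univ.filter (fun y : ZMod p => y ≠ 0), chiBar p (y * Trq p F (a * d))) *
      (∑ z ∈ univ.filter (fun z : ZMod p => z ≠ 0), chiBar p (z * Trq p F (b * d)))) = (etaBar p (-β) * ((p : ℂ) - 1) - etaBar p (-α)) * ((p : ℂ) - 1) * (GaussQ p F * GaussP p)) ∧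
    (α ≠ 0 ∧ β ≠ 0 ∧ α * β ≠ γ ^ 2 →
      (∑ d : F,
      (∑ x ∈ univ.filter (fun x : ZMod p => x ≠ 0), chiBar p (x * Trq p F (d ^ 2))) *
      (∑ y ∈ univ.filter (fun y : ZMod p => y ≠ 0), chiBar p (y * Trq p F (a * d))) *
      (∑ z ∈ univ.filter (fun z : ZMod p => z ≠ 0), chiBar p (z * Trq p F (b * d)))) = -((etaBar p (-β) + etaBar p (-α)) * ((p : ℂ) - 1) * (GaussQ p F * GaussP p))) := by
  have odd_finrank : Odd (Module.finrank (ZMod p) F) :=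
    (finrank_zmod_of_card_eq_pow hq).symm ▸ hmodd
  simpa only [chiBar_eq_stdAddChar, etaBar_eq_quadraticChar, GaussQ_eq_quadraticGaussSum,
    GaussP_eq_quadraticGaussSum, Omega4, Trq, ZMod.card] using
    Omega4_eval_m_odd_general (ringChar_zmod_ne_two hp) odd_finrank (stdAddChar_ne_one p)
      a b α β γ hα hβ hγ
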